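/- Let γ: ℝ/ℤ → ℝ³ be a C² injective closed curve parametrized by arc length (|γ′| ≡ 1, total length 1), let c = γ(0), r > 0, and let η = I_{c,r} ∘ γ restricted to the open interval (0,1). Then ∬_{(0,1)²} ( 1/|η(s)−η(t)|² − 1/ℓ_η(s,t)² ) · |η′(s)| · |η′(t)| ds dt = ∬_{(ℝ/ℤ)²} ( 1/|γ(s)−γ(t)|² − 1/d(s,t)² ) ds dt − 4, where ℓ_η(s,t) = | ∫_s^t |η′(u)| du | is the arc length of η between parameters s and t; both sides are finite. (The Möbius invariance of E⁽²⁾∘ holds even when the image is an open long knot.) -/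

import Mathlib

open MeasureTheory

noncomputable section

/-- ℝ³ with the Euclidean norm. -/
abbrev E3 := EuclideanSpace ℝ (Fin 3)

/-- The arc-length distance on ℝ/ℤ, written for parameters `s, t ∈ [0,1]`. -/
def arcd (s t : ℝ) : ℝ := min |s - t| (1 - |s - t|)

/-- Inversion in the sphere of center `c` and radius `r`. -/
def inv3 (c : E3) (r : ℝ) (x : E3) : E3 := c + (r ^ 2 / ‖x - c‖ ^ 2) • (x - c)

/-- The arc length of `η` between the parameters `s` and `t`. -/
def arcLen (η : ℝ → E3) (s t : ℝ) : ℝ := |∫ u in s..t, ‖deriv η u‖|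

section Helpers
open Set Filter Topology

/-- Mean value theorem, in the form used below. -/
lemma mvt_icc {a b : ℝ} {F f : ℝ → ℝ} (hF : ∀ x ∈ Icc a b, HasDerivAt F (f x) x)
    {s t : ℝ} (hs : s ∈ Icc a b) (ht : t ∈ Icc a b) :
    ∃ ξ ∈ Icc a b, |ξ - s| ≤ |t - s| ∧ |ξ - t| ≤ |t - s| ∧ F t - F s = (t - s) * f ξ := by
  rcases lt_trichotomy s t with h | h | h
  · obtain ⟨ξ, hξ, h1⟩ := exists_hasDerivAt_eq_slope F f h
      (fun x hx => (hF x ⟨hs.1.trans hx.1, hx.2.trans ht.2⟩).continuousAt.continuousWithinAt)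
      (fun x hx => hF x ⟨hs.1.trans hx.1.le, hx.2.le.trans ht.2⟩)
    refine ⟨ξ, ⟨hs.1.trans hξ.1.le, hξ.2.le.trans ht.2⟩, ?_, ?_, ?_⟩
    · rw [abs_of_pos (by linarith [hξ.1]), abs_of_pos (by linarith)]; linarith [hξ.2]
    · rw [abs_of_neg (by linarith [hξ.2]), abs_of_pos (by linarith)]; linarith [hξ.1]
    · rw [h1]; field_simp [sub_ne_zero.2 h.ne']
  · subst h; exact ⟨s, hs, by simp, by simp, by simp⟩
  · obtain ⟨ξ, hξ, h1⟩ := exists_hasDerivAt_eq_slope F f h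
      (fun x hx => (hF x ⟨ht.1.trans hx.1, hx.2.trans hs.2⟩).continuousAt.continuousWithinAt)
      (fun x hx => hF x ⟨ht.1.trans hx.1.le, hx.2.le.trans hs.2⟩)
    refine ⟨ξ, ⟨ht.1.trans hξ.1.le, hξ.2.le.trans hs.2⟩, ?_, ?_, ?_⟩
    · rw [abs_of_neg (by linarith [hξ.2]), abs_of_neg (by linarith)]; linarith [hξ.1]
    · rw [abs_of_pos (by linarith [hξ.1]), abs_of_neg (by linarith)]; linarith [hξ.2]
    · rw [h1]
      have : s - t ≠ 0 := sub_ne_zero.2 h.ne'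
      field_simp; ring

/-- Boundedness of the difference kernel. -/
lemma kernel_bound {a b : ℝ} (hab : a < b) (hb1 : b - a ≤ 1) {F f f' : ℝ → ℝ} {K : ℝ}
    (hF : ∀ x ∈ Icc a b, HasDerivAt F (f x) x)
    (hf : ∀ x ∈ Icc a b, HasDerivAt f (f' x) x)
    (hf' : ∀ x ∈ Icc a b, ∀ y ∈ Icc a b, |f' x - f' y| ≤ K * |x - y|)
    (hpos : ∀ x ∈ Icc a b, 0 < f x) :
    ∃ C, ∀ s ∈ Icc a b, ∀ t ∈ Icc a b,
      |f s * f t / (F t - F s) ^ 2 - 1 / (t - s) ^ 2| ≤ C := by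
  have hfc : ContinuousOn f (Icc a b) := fun x hx => (hf x hx).continuousAt.continuousWithinAt
  have hne : (Icc a b).Nonempty := nonempty_Icc.2 hab.le
  obtain ⟨xm, hxm, hm⟩ := isCompact_Icc.exists_isMinOn hne hfc
  obtain ⟨xM, hxM, hM⟩ := isCompact_Icc.exists_isMaxOn hne hfc
  set m := f xm
  set M := f xM
  have hm0 : 0 < m := hpos _ hxm
  have hM0 : 0 < M := hpos _ hxM
  have hK0 : 0 ≤ K := by
    have := hf' a ⟨le_rfl, hab.le⟩ b ⟨hab.le, le_rfl⟩
    by_contra! h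
    have h2 : 0 < |a - b| := abs_pos.2 (by linarith)
    nlinarith [abs_nonneg (f' a - f' b)]
  set K1 := |f' a| + K
  have hK1 : ∀ x ∈ Icc a b, |f' x| ≤ K1 := by
    intro x hx
    have h1 := hf' x hx a ⟨le_rfl, hab.le⟩
    have h2 : |x - a| ≤ 1 := by rw [abs_of_nonneg (by linarith [hx.1])]; linarith [hx.2]
    have h3 : |f' x| ≤ |f' x - f' a| + |f' a| := by
      have := abs_add_le (f' x - f' a) (f' a); simpa using this
    nlinarith
  refine ⟨(K1 ^ 2 + 2 * M * K + K ^ 2) / m ^ 2, fun s hs t ht => ?_⟩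
  by_cases hst : t = s
  · subst hst; simp; positivity
  set x := |t - s| with hx
  have hx0 : 0 < x := abs_pos.2 (sub_ne_zero.2 hst)
  have hx1 : x ≤ 1 := by
    rw [hx, abs_le]; constructor <;> linarith [hs.1, hs.2, ht.1, ht.2]
  -- increments
  obtain ⟨ξ, hξ, -, -, hD⟩ := mvt_icc hF hs ht
  obtain ⟨ζ, hζ, -, -, hΔ⟩ := mvt_icc hf hs ht
  have hΔ' : |f t - f s| ≤ K1 * x := by
    rw [hΔ, abs_mul, mul_comm]; exact mul_le_mul_of_nonneg_right (hK1 _ hζ) (abs_nonneg _)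
  have hDx : m * x ≤ |F t - F s| := by
    rw [hD, abs_mul, mul_comm, abs_of_pos (hpos _ hξ)]
    exact mul_le_mul_of_nonneg_left (hm hξ) hx0.le
  -- trapezoid error
  set E := F t - F s - (t - s) * (f s + f t) / 2 with hE
  have hEb : |E| ≤ K * x ^ 3 := by
    have hG : ∀ y ∈ Icc a b, HasDerivAt (fun y => F y - F s - (y - s) * (f s + f y) / 2)
        ((f y - f s - (y - s) * f' y) / 2) y := by
      intro y hy
      have := ((hF y hy).sub_const (F s)).sub
        ((((hasDerivAt_id y).sub_const s).mul ((hf y hy).const_add (f s))).div_const 2)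
      refine this.congr_deriv ?_
      simp; ring
    obtain ⟨y, hy, hys, -, hy2⟩ := mvt_icc hG hs ht
    have hE2 : E = (t - s) * ((f y - f s - (y - s) * f' y) / 2) := by
      rw [← hy2, hE]; ring
    obtain ⟨z, hz, -, hz2, hz3⟩ := mvt_icc hf hs hy
    have h5 : f y - f s - (y - s) * f' y = (y - s) * (f' z - f' y) := by rw [hz3]; ring
    have h6 : |f' z - f' y| ≤ K * x :=
      (hf' z hz y hy).trans (mul_le_mul_of_nonneg_left (hz2.trans hys) hK0)
    rw [hE2, h5, abs_mul, abs_div, abs_mul]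
    have h7 : |y - s| * |f' z - f' y| ≤ x * (K * x) :=
      mul_le_mul hys h6 (abs_nonneg _) hx0.le
    rw [abs_of_pos (show (0:ℝ) < 2 by norm_num)]
    have h8 : |t - s| * (|y - s| * |f' z - f' y| / 2) ≤ x * (x * (K * x) / 2) := by
      apply mul_le_mul_of_nonneg_left _ hx0.le
      linarith
    have : 0 ≤ K * x ^ 3 := by positivity
    nlinarith
  have hx2 : (t - s) ^ 2 = x ^ 2 := (sq_abs _).symm
  have hD0 : F t - F s ≠ 0 := by
    intro h; rw [h, abs_zero] at hDx; nlinarith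
  have hts : t - s ≠ 0 := sub_ne_zero.2 hst
  have hDE : F t - F s = (t - s) * (f s + f t) / 2 + E := by rw [hE]; ring
  have key : f s * f t / (F t - F s) ^ 2 - 1 / (t - s) ^ 2 =
      (-(x ^ 2 * (f t - f s) ^ 2 / 4) - (t - s) * (f s + f t) * E - E ^ 2)
        / ((F t - F s) ^ 2 * x ^ 2) := by
    rw [← hx2, div_sub_div _ _ (pow_ne_zero 2 hD0) (pow_ne_zero 2 hts)]
    congr 1
    rw [hDE]; ring
  have hDen : m ^ 2 * x ^ 4 ≤ (F t - F s) ^ 2 * x ^ 2 := by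
    have : (m * x) ^ 2 ≤ (F t - F s) ^ 2 := by
      rw [← sq_abs (F t - F s)]; exact pow_le_pow_left₀ (by positivity) hDx 2
    nlinarith [sq_nonneg x]
  have n1 : |x ^ 2 * (f t - f s) ^ 2 / 4| ≤ K1 ^ 2 * x ^ 4 := by
    have : (f t - f s) ^ 2 ≤ (K1 * x) ^ 2 := by
      rw [← sq_abs (f t - f s)]; exact pow_le_pow_left₀ (abs_nonneg _) hΔ' 2
    rw [abs_of_nonneg (by positivity)]
    have h2 := mul_le_mul_of_nonneg_left this (sq_nonneg x)
    have h3 : 0 ≤ x ^ 2 * (f t - f s) ^ 2 := by positivity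
    have h4 : x ^ 2 * (K1 * x) ^ 2 = K1 ^ 2 * x ^ 4 := by ring
    linarith
  have n2 : |(t - s) * (f s + f t) * E| ≤ 2 * M * K * x ^ 4 := by
    rw [abs_mul, abs_mul, ← hx, abs_of_pos (add_pos (hpos s hs) (hpos t ht))]
    have h1 : f s + f t ≤ 2 * M := by
      have h2 : f s ≤ M := hM hs
      have h3 : f t ≤ M := hM ht
      linarith
    calc x * (f s + f t) * |E| ≤ x * (2 * M) * (K * x ^ 3) := by
          apply mul_le_mul _ hEb (abs_nonneg _) (by positivity)
          exact mul_le_mul_of_nonneg_left h1 hx0.le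
      _ = _ := by ring
  have n3 : |E ^ 2| ≤ K ^ 2 * x ^ 4 := by
    rw [abs_pow]
    calc |E| ^ 2 ≤ (K * x ^ 3) ^ 2 := pow_le_pow_left₀ (abs_nonneg _) hEb 2
      _ = K ^ 2 * x ^ 4 * x ^ 2 := by ring
      _ ≤ K ^ 2 * x ^ 4 * 1 := by
          apply mul_le_mul_of_nonneg_left _ (by positivity)
          nlinarith
      _ = _ := by ring
  rw [key, abs_div, abs_of_pos (show 0 < (F t - F s) ^ 2 * x ^ 2 by positivity)]
  have num : |-(x ^ 2 * (f t - f s) ^ 2 / 4) - (t - s) * (f s + f t) * E - E ^ 2| ≤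
      (K1 ^ 2 + 2 * M * K + K ^ 2) * x ^ 4 := by
    have e1 := abs_le.1 n1
    have e2 := abs_le.1 n2
    have e3 := abs_le.1 n3
    rw [abs_le]
    constructor <;> linarith [e1.1, e1.2, e2.1, e2.2, e3.1, e3.2]
  rw [div_le_div_iff₀ (by positivity) (by positivity)]
  calc _ ≤ ((K1 ^ 2 + 2 * M * K + K ^ 2) * x ^ 4) * m ^ 2 :=
        mul_le_mul_of_nonneg_right num (by positivity)
    _ = (K1 ^ 2 + 2 * M * K + K ^ 2) * (m ^ 2 * x ^ 4) := by ring
    _ ≤ _ := mul_le_mul_of_nonneg_left hDen (by positivity)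


lemma incr_ne {a b : ℝ} {F f : ℝ → ℝ}
    (hF : ∀ x ∈ Icc a b, HasDerivAt F (f x) x) (hpos : ∀ x ∈ Icc a b, 0 < f x)
    {s t : ℝ} (hs : s ∈ Icc a b) (ht : t ∈ Icc a b) (h : t ≠ s) : F t - F s ≠ 0 := by
  obtain ⟨ξ, hξ, -, -, hD⟩ := mvt_icc hF hs ht
  rw [hD]
  exact mul_ne_zero (sub_ne_zero.2 h) (hpos _ hξ).ne'

lemma slope_pos' {a b : ℝ} {F f : ℝ → ℝ}
    (hF : ∀ x ∈ Icc a b, HasDerivAt F (f x) x) (hpos : ∀ x ∈ Icc a b, 0 < f x)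
    {s t : ℝ} (hs : s ∈ Icc a b) (ht : t ∈ Icc a b) : 0 < dslope F s t := by
  by_cases h : t = s
  · subst h; rw [dslope_same, (hF _ hs).deriv]; exact hpos _ hs
  · obtain ⟨ξ, hξ, -, -, hD⟩ := mvt_icc hF hs ht
    rw [dslope_of_ne _ h, slope_def_field, hD, mul_div_cancel_left₀ _ (sub_ne_zero.2 h)]
    exact hpos _ hξ

lemma kernel_integrable {a b : ℝ} (hab : a < b) (hb1 : b - a ≤ 1) {F f f' : ℝ → ℝ} {K : ℝ}
    (hF : ∀ x ∈ Icc a b, HasDerivAt F (f x) x)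
    (hf : ∀ x ∈ Icc a b, HasDerivAt f (f' x) x)
    (hf' : ∀ x ∈ Icc a b, ∀ y ∈ Icc a b, |f' x - f' y| ≤ K * |x - y|)
    (hpos : ∀ x ∈ Icc a b, 0 < f x) :
    IntegrableOn (fun p : ℝ × ℝ => f p.1 * f p.2 / (F p.2 - F p.1) ^ 2 - 1 / (p.2 - p.1) ^ 2)
      (Icc a b ×ˢ Icc a b) := by
  obtain ⟨C, hC⟩ := kernel_bound hab hb1 hF hf hf' hpos
  have hms : MeasurableSet (Icc a b ×ˢ Icc a b) := measurableSet_Icc.prod measurableSet_Icc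
  have hfc : ContinuousOn f (Icc a b) := fun x hx => (hf x hx).continuousAt.continuousWithinAt
  have hFc : ContinuousOn F (Icc a b) := fun x hx => (hF x hx).continuousAt.continuousWithinAt
  have m1 : AEMeasurable (fun p : ℝ × ℝ => f p.1) (volume.restrict (Icc a b ×ˢ Icc a b)) :=
    (hfc.comp continuousOn_fst fun p hp => hp.1).aemeasurable hms
  have m2 : AEMeasurable (fun p : ℝ × ℝ => f p.2) (volume.restrict (Icc a b ×ˢ Icc a b)) :=
    (hfc.comp continuousOn_snd fun p hp => hp.2).aemeasurable hms
  have m3 : AEMeasurable (fun p : ℝ × ℝ => F p.1) (volume.restrict (Icc a b ×ˢ Icc a b)) :=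
    (hFc.comp continuousOn_fst fun p hp => hp.1).aemeasurable hms
  have m4 : AEMeasurable (fun p : ℝ × ℝ => F p.2) (volume.restrict (Icc a b ×ˢ Icc a b)) :=
    (hFc.comp continuousOn_snd fun p hp => hp.2).aemeasurable hms
  have m5 : AEMeasurable
      (fun p : ℝ × ℝ => f p.1 * f p.2 / (F p.2 - F p.1) ^ 2 - 1 / (p.2 - p.1) ^ 2)
      (volume.restrict (Icc a b ×ˢ Icc a b)) := by
    apply AEMeasurable.sub
    · exact (m1.mul m2).div ((m4.sub m3).pow_const 2)
    · exact (Measurable.aemeasurable (by fun_prop))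
  refine IntegrableOn.of_bound (C := C) ?_ m5.aestronglyMeasurable ?_
  · exact (isCompact_Icc.prod isCompact_Icc).measure_lt_top
  · filter_upwards [ae_restrict_mem hms] with p hp
    exact hC _ hp.1 _ hp.2

lemma kernel_inner {a b : ℝ} (hab : a < b) {F f f' : ℝ → ℝ}
    (hF : ∀ x ∈ Icc a b, HasDerivAt F (f x) x)
    (hf : ∀ x ∈ Icc a b, HasDerivAt f (f' x) x)
    (hpos : ∀ x ∈ Icc a b, 0 < f x) {s : ℝ} (hs : s ∈ Ioo a b)
    (hi : IntegrableOn (fun t => f s * f t / (F t - F s) ^ 2 - 1 / (t - s) ^ 2) (Icc a b)) :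
    ∫ t in Icc a b, (f s * f t / (F t - F s) ^ 2 - 1 / (t - s) ^ 2) =
      (1 / (b - s) - f s / (F b - F s)) - (1 / (a - s) - f s / (F a - F s)) := by
  have hs' : s ∈ Icc a b := Ioo_subset_Icc_self hs
  set Φ : ℝ → ℝ := Function.update (fun t => 1 / (t - s) - f s / (F t - F s)) s
    (f' s / 2 * (1 / f s)) with hΦ
  have hder0 : ∀ t ∈ Icc a b, t ≠ s →
      HasDerivAt (fun t => 1 / (t - s) - f s / (F t - F s))
        (f s * f t / (F t - F s) ^ 2 - 1 / (t - s) ^ 2) t := by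
    intro t ht hts
    have h1 := (hasDerivAt_const t (1:ℝ)).div ((hasDerivAt_id t).sub_const s) (sub_ne_zero.2 hts)
    have h2 := (hasDerivAt_const t (f s)).div ((hF t ht).sub_const (F s))
      (incr_ne hF hpos hs' ht hts)
    refine (h1.sub h2).congr_deriv ?_
    simp; ring
  have hev : ∀ t, t ≠ s → Φ =ᶠ[𝓝 t] (fun t => 1 / (t - s) - f s / (F t - F s)) := by
    intro t hts
    filter_upwards [isOpen_ne.mem_nhds hts] with y hy
    simp only [hΦ]
    rw [Function.update_of_ne hy]
  have hder : ∀ t ∈ Icc a b, t ≠ s →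
      HasDerivAt Φ (f s * f t / (F t - F s) ^ 2 - 1 / (t - s) ^ 2) t := fun t ht hts =>
    (hder0 t ht hts).congr_of_eventuallyEq (hev t hts)
  have hnear : ∀ᶠ t in 𝓝[≠] s, t ∈ Icc a b ∧ t ≠ s := by
    have h1 : ∀ᶠ t in 𝓝[≠] s, t ∈ Icc a b := nhdsWithin_le_nhds (Icc_mem_nhds hs.1 hs.2)
    filter_upwards [h1, self_mem_nhdsWithin] with t ht ht2
    exact ⟨ht, ht2⟩
  have hcs : ContinuousAt Φ s := by
    rw [hΦ, continuousAt_update_same]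
    have t1 : Tendsto (fun t => (F t - F s - f s * (t - s)) / (t - s) ^ 2) (𝓝[≠] s)
        (𝓝 (f' s / 2)) := by
      apply HasDerivAt.lhopital_zero_nhdsNE (f' := fun t => f t - f s) (g' := fun t => 2 * (t - s))
      · filter_upwards [hnear] with t ht
        have := ((hF t ht.1).sub_const (F s)).sub (((hasDerivAt_id t).sub_const s).const_mul (f s))
        exact this.congr_deriv (by simp)
      · filter_upwards [hnear] with t ht
        have := ((hasDerivAt_id t).sub_const s).pow 2
        exact this.congr_deriv (by simp)
      · filter_upwards [hnear] with t ht
        exact mul_ne_zero two_ne_zero (sub_ne_zero.2 ht.2)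
      · have : ContinuousAt (fun t => F t - F s - f s * (t - s)) s := by
          have := (hF s hs').continuousAt
          fun_prop
        have h2 := this.tendsto.mono_left (nhdsWithin_le_nhds (s := {s}ᶜ))
        simpa using h2
      · have : ContinuousAt (fun t : ℝ => (t - s) ^ 2) s := by fun_prop
        have h2 := this.tendsto.mono_left (nhdsWithin_le_nhds (s := {s}ᶜ))
        simpa using h2
      · have h1 := (hasDerivAt_iff_tendsto_slope.1 (hf s hs')).div_const 2
        refine h1.congr' ?_
        filter_upwards [hnear] with t ht
        rw [slope_def_field]
        field_simp
    have t2 : Tendsto (fun t => 1 / slope F s t) (𝓝[≠] s) (𝓝 (1 / f s)) :=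
      tendsto_const_nhds.div (hasDerivAt_iff_tendsto_slope.1 (hF s hs')) (hpos s hs').ne'
    refine (t1.mul t2).congr' ?_
    filter_upwards [hnear] with t ht
    have h1 := sub_ne_zero.2 ht.2
    have h2 := incr_ne hF hpos hs' ht.1 ht.2
    rw [slope_def_field]
    field_simp
  have hcont : ContinuousOn Φ (Icc a b) := by
    intro t ht
    by_cases hts : t = s
    · subst hts; exact hcs.continuousWithinAt
    · exact (hder t ht hts).continuousAt.continuousWithinAt
  have := integral_eq_of_hasDerivAt_off_countable_of_le Φ _ hab.le (countable_singleton s) hcont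
    (fun t ht => hder t (Ioo_subset_Icc_self ht.1) ht.2)
    ((intervalIntegrable_iff_integrableOn_Icc_of_le hab.le).2 hi)
  rw [intervalIntegral.integral_of_le hab.le, ← integral_Icc_eq_integral_Ioc] at this
  rw [this]
  simp only [hΦ]
  rw [Function.update_of_ne hs.2.ne', Function.update_of_ne hs.1.ne]

lemma kernel_integral {a b : ℝ} (hab : a < b) (hb1 : b - a ≤ 1) {F f f' : ℝ → ℝ} {K : ℝ}
    (hF : ∀ x ∈ Icc a b, HasDerivAt F (f x) x)
    (hf : ∀ x ∈ Icc a b, HasDerivAt f (f' x) x)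
    (hf' : ∀ x ∈ Icc a b, ∀ y ∈ Icc a b, |f' x - f' y| ≤ K * |x - y|)
    (hpos : ∀ x ∈ Icc a b, 0 < f x) :
    ∫ p in Icc a b ×ˢ Icc a b, (f p.1 * f p.2 / (F p.2 - F p.1) ^ 2 - 1 / (p.2 - p.1) ^ 2)
      = Real.log (f a) + Real.log (f b) - 2 * Real.log ((F b - F a) / (b - a)) := by
  have hkerI := kernel_integrable hab hb1 hF hf hf' hpos
  have ha' : a ∈ Icc a b := ⟨le_rfl, hab.le⟩
  have hb' : b ∈ Icc a b := ⟨hab.le, le_rfl⟩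
  have hprod : Integrable
      (fun p : ℝ × ℝ => f p.1 * f p.2 / (F p.2 - F p.1) ^ 2 - 1 / (p.2 - p.1) ^ 2)
      ((volume.restrict (Icc a b)).prod (volume.restrict (Icc a b))) := by
    rw [Measure.prod_restrict]; exact hkerI
  have hIoo : ∀ᵐ s ∂(volume.restrict (Icc a b)), s ∈ Ioo a b := by
    rw [← restrict_Ioo_eq_restrict_Icc]
    exact ae_restrict_mem measurableSet_Ioo
  have hae : (fun s => ∫ t in Icc a b, (f s * f t / (F t - F s) ^ 2 - 1 / (t - s) ^ 2))
      =ᵐ[volume.restrict (Icc a b)]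
      (fun s => (1 / (b - s) - f s / (F b - F s)) - (1 / (a - s) - f s / (F a - F s))) := by
    filter_upwards [hIoo, hprod.prod_right_ae] with s hs hsi
    exact kernel_inner hab hF hf hpos hs hsi
  have hint2 : IntegrableOn
      (fun s => (1 / (b - s) - f s / (F b - F s)) - (1 / (a - s) - f s / (F a - F s)))
      (Icc a b) := (hprod.integral_prod_left).congr hae
  rw [Measure.volume_eq_prod, setIntegral_prod _ hkerI, integral_congr_ae hae]
  set Ψ : ℝ → ℝ := fun s => Real.log (dslope F b s) - Real.log (dslope F a s) with hΨ
  have hFc : ContinuousOn F (Icc a b) := fun x hx => (hF x hx).continuousAt.continuousWithinAt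
  have hds : ∀ c ∈ Icc a b, ContinuousOn (dslope F c) (Icc a b) := by
    intro c hc x hx
    by_cases h : x = c
    · subst h
      exact (continuousAt_dslope_same.2 (hF x hc).differentiableAt).continuousWithinAt
    · exact ((continuousAt_dslope_of_ne h).2 (hF x hx).continuousAt).continuousWithinAt
  have hcont : ContinuousOn Ψ (Icc a b) :=
    ((hds b hb').log fun x hx => (slope_pos' hF hpos hb' hx).ne').sub
      ((hds a ha').log fun x hx => (slope_pos' hF hpos ha' hx).ne')
  have hdl : ∀ c ∈ Icc a b, ∀ s ∈ Icc a b, s ≠ c →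
      HasDerivAt (fun s => Real.log (dslope F c s)) (f s / (F s - F c) - 1 / (s - c)) s := by
    intro c hc s hs hsc
    have h0 := incr_ne hF hpos hc hs hsc
    have h1 := sub_ne_zero.2 hsc
    have hd : HasDerivAt (fun s => Real.log ((F s - F c) / (s - c)))
        (f s / (F s - F c) - 1 / (s - c)) s := by
      have := (((hF s hs).sub_const (F c)).div ((hasDerivAt_id s).sub_const c) h1).log
        (div_ne_zero h0 h1)
      refine this.congr_deriv ?_
      simp; field_simp
    refine hd.congr_of_eventuallyEq ?_
    filter_upwards [isOpen_ne.mem_nhds hsc] with y hy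
    rw [dslope_of_ne _ hy, slope_def_field]
  have := integral_eq_of_hasDerivAt_off_countable_of_le Ψ
    (fun s => (1 / (b - s) - f s / (F b - F s)) - (1 / (a - s) - f s / (F a - F s)))
    hab.le countable_empty hcont
    (fun s hs => by
      have hs1 : s ∈ Ioo a b := hs.1
      have hs' : s ∈ Icc a b := Ioo_subset_Icc_self hs.1
      refine ((hdl b hb' s hs' hs1.2.ne).sub (hdl a ha' s hs' hs1.1.ne')).congr_deriv ?_
      rw [← neg_sub s b, ← neg_sub (F s) (F b), ← neg_sub s a, ← neg_sub (F s) (F a)]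
      simp only [div_neg]; ring)
    ((intervalIntegrable_iff_integrableOn_Icc_of_le hab.le).2 hint2)
  rw [intervalIntegral.integral_of_le hab.le, ← integral_Icc_eq_integral_Ioc] at this
  rw [this]
  simp only [hΨ]
  rw [dslope_same, dslope_same, dslope_of_ne _ hab.ne, dslope_of_ne _ hab.ne', slope_comm F b a,
    slope_def_field, (hF a ha').deriv, (hF b hb').deriv]
  ring


/-- Differentiating `g (max x (1/2))` when the derivative of g vanishes at 1/2. -/
lemma hasDerivAt_comp_max {g g' : ℝ → ℝ} (hg : ∀ v ∈ Ioo (0:ℝ) 1, HasDerivAt g (g' v) v)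
    (h0 : g' (1/2) = 0) {x : ℝ} (hx : x < 1) :
    HasDerivAt (fun x => g (max x (1/2))) (g' (max x (1/2))) x := by
  rcases lt_trichotomy x (1/2) with h | h | h
  · rw [max_eq_right h.le, h0]
    refine (hasDerivAt_const x (g (1/2))).congr_of_eventuallyEq ?_
    filter_upwards [Iio_mem_nhds h] with y hy
    rw [max_eq_right (le_of_lt hy)]
  · subst h
    rw [max_self]
    have hd := hg (1/2) ⟨by norm_num, by norm_num⟩
    rw [h0] at hd ⊢
    have hl : HasDerivWithinAt (fun x => g (max x (1/2))) 0 (Iic (1/2)) (1/2) := by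
      refine (hasDerivWithinAt_const (1/2) _ (g (1/2))).congr (fun y hy => ?_) (by simp)
      rw [max_eq_right hy]
    have hr : HasDerivWithinAt (fun x => g (max x (1/2))) 0 (Ici (1/2)) (1/2) := by
      refine hd.hasDerivWithinAt.congr (fun y hy => ?_) (by simp)
      rw [max_eq_left hy]
    have := hl.union hr
    rwa [Iic_union_Ici, hasDerivWithinAt_univ] at this
  · rw [max_eq_left h.le]
    refine (hg x ⟨by linarith, hx⟩).congr_of_eventuallyEq ?_
    filter_upwards [Ioi_mem_nhds h] with y hy
    rw [max_eq_left (le_of_lt hy)]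

def qq (v : ℝ) : ℝ := 1 / v ^ 2 - 1 / (1 - v) ^ 2
def kk (v : ℝ) : ℝ := 4 - 1 / v - 1 / (1 - v)
def nn (v : ℝ) : ℝ := Real.log (1 - v) - Real.log v + 4 * v - 2

lemma kk_deriv : ∀ v ∈ Ioo (0:ℝ) 1, HasDerivAt kk (qq v) v := by
  intro v hv
  have h1 : v ≠ 0 := hv.1.ne'
  have h2 : 1 - v ≠ 0 := by linarith [hv.2]
  have := (((hasDerivAt_const v (4:ℝ)).sub ((hasDerivAt_const v (1:ℝ)).div (hasDerivAt_id v) h1)).sub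
    ((hasDerivAt_const v (1:ℝ)).div ((hasDerivAt_id v).const_sub 1) h2))
  refine this.congr_deriv ?_
  simp [qq]; ring

lemma nn_deriv : ∀ v ∈ Ioo (0:ℝ) 1, HasDerivAt nn (kk v) v := by
  intro v hv
  have h1 : v ≠ 0 := hv.1.ne'
  have h2 : 1 - v ≠ 0 := by linarith [hv.2]
  have := ((((hasDerivAt_id v).const_sub 1).log h2).sub ((hasDerivAt_id v).log h1)).add
    ((hasDerivAt_id v).const_mul 4) |>.sub_const 2
  refine this.congr_deriv ?_
  simp [kk]; ring

def qt (x : ℝ) : ℝ := qq (max x (1/2)) + qq (max (-x) (1/2))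
def kt (x : ℝ) : ℝ := kk (max x (1/2)) - kk (max (-x) (1/2))
def nt (x : ℝ) : ℝ := nn (max x (1/2)) + nn (max (-x) (1/2))

lemma qq_half : qq (1/2) = 0 := by norm_num [qq]
lemma kk_half : kk (1/2) = 0 := by norm_num [kk]
lemma nn_half : nn (1/2) = 0 := by norm_num [nn]

lemma kt_deriv {x : ℝ} (h1 : -1 < x) (h2 : x < 1) : HasDerivAt kt (qt x) x := by
  have a1 := hasDerivAt_comp_max kk_deriv qq_half h2
  have a2 := (hasDerivAt_comp_max kk_deriv qq_half (x := -x) (by linarith)).comp x (hasDerivAt_neg x)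
  refine (a1.sub a2).congr_deriv ?_
  simp [qt]

lemma nt_deriv {x : ℝ} (h1 : -1 < x) (h2 : x < 1) : HasDerivAt nt (kt x) x := by
  have a1 := hasDerivAt_comp_max nn_deriv kk_half h2
  have a2 := (hasDerivAt_comp_max nn_deriv kk_half (x := -x) (by linarith)).comp x (hasDerivAt_neg x)
  refine (a1.add a2).congr_deriv ?_
  simp [kt]; ring

lemma qt_cont : ContinuousOn qt (Ioo (-1) 1) := by
  have h : ∀ g : ℝ → ℝ, ContinuousOn g (Ioo (-1) 1) → (∀ x ∈ Ioo (-1:ℝ) 1, g x < 1) →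
      ContinuousOn (fun x => qq (max (g x) (1/2))) (Ioo (-1) 1) := by
    intro g hg h1
    unfold qq
    have hm : ContinuousOn (fun x => max (g x) (1/2)) (Ioo (-1) 1) := hg.sup continuousOn_const
    apply ContinuousOn.sub
    · refine continuousOn_const.div (hm.pow 2) fun x hx => ?_
      have : 1/2 ≤ max (g x) (1/2) := le_max_right _ _
      positivity
    · refine continuousOn_const.div ((continuousOn_const.sub hm).pow 2) fun x hx => ?_
      have : max (g x) (1/2) < 1 := max_lt (h1 x hx) (by norm_num)
      have : 0 < 1 - max (g x) (1/2) := by linarith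
      positivity
  exact (h _ continuousOn_id fun x hx => hx.2).add
    (h _ continuousOn_neg fun x hx => by linarith [hx.1])

lemma qt_eq {s t : ℝ} (h1 : -1 < t - s) (h2 : t - s < 1) :
    1 / (t - s) ^ 2 - 1 / arcd s t ^ 2 = qt (t - s) := by
  unfold arcd qt
  rw [← abs_sub_comm t s]
  set x := t - s
  rcases le_total |x| (1/2) with h | h
  · rw [min_eq_left (by linarith), sq_abs, sub_self, max_eq_right (le_of_abs_le h),
      max_eq_right (neg_le_of_abs_le h |> fun h' => by linarith), qq_half, add_zero]
  · rw [min_eq_right (by linarith)]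
    rcases le_total 0 x with hx | hx
    · rw [abs_of_nonneg hx] at h ⊢
      rw [max_eq_left h, max_eq_right (by linarith), qq_half, add_zero, qq]
    · rw [abs_of_nonpos hx] at h ⊢
      rw [max_eq_left h, max_eq_right (by linarith), qq_half, zero_add, qq]
      ring

lemma arc_integral {a b : ℝ} (hab : a < b) (hw : b - a < 1) (hw2 : 1/2 ≤ b - a) :
    IntegrableOn (fun p : ℝ × ℝ => 1 / (p.2 - p.1) ^ 2 - 1 / arcd p.1 p.2 ^ 2)
      (Icc a b ×ˢ Icc a b) ∧
    ∫ p in Icc a b ×ˢ Icc a b, (1 / (p.2 - p.1) ^ 2 - 1 / arcd p.1 p.2 ^ 2) =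
      2 * nn (b - a) := by
  have hms : MeasurableSet (Icc a b ×ˢ Icc a b) := measurableSet_Icc.prod measurableSet_Icc
  have hd : ∀ s ∈ Icc a b, ∀ t ∈ Icc a b, -1 < t - s ∧ t - s < 1 := fun s hs t ht =>
    ⟨by linarith [hs.1, hs.2, ht.1, ht.2], by linarith [hs.1, hs.2, ht.1, ht.2]⟩
  have heq : EqOn (fun p : ℝ × ℝ => 1 / (p.2 - p.1) ^ 2 - 1 / arcd p.1 p.2 ^ 2)
      (fun p => qt (p.2 - p.1)) (Icc a b ×ˢ Icc a b) := fun p hp =>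
    qt_eq (hd _ hp.1 _ hp.2).1 (hd _ hp.1 _ hp.2).2
  have hi : IntegrableOn (fun p : ℝ × ℝ => qt (p.2 - p.1)) (Icc a b ×ˢ Icc a b) := by
    apply ContinuousOn.integrableOn_compact (isCompact_Icc.prod isCompact_Icc)
    exact qt_cont.comp (by fun_prop) fun p hp => hd _ hp.1 _ hp.2
  have ha' : a ∈ Icc a b := ⟨le_rfl, hab.le⟩
  have hb' : b ∈ Icc a b := ⟨hab.le, le_rfl⟩
  refine ⟨hi.congr_fun heq.symm hms, ?_⟩
  rw [setIntegral_congr_fun hms heq, Measure.volume_eq_prod, setIntegral_prod _ hi]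
  have hin : EqOn (fun s => ∫ t in Icc a b, qt (t - s)) (fun s => kt (b - s) - kt (a - s))
      (Icc a b) := by
    intro s hs
    simp only
    rw [integral_Icc_eq_integral_Ioc, ← intervalIntegral.integral_of_le hab.le]
    rw [intervalIntegral.integral_eq_sub_of_hasDerivAt (f := fun t => kt (t - s))]
    · intro t ht
      rw [uIcc_of_le hab.le] at ht
      have := (kt_deriv (hd s hs t ht).1 (hd s hs t ht).2).comp t ((hasDerivAt_id t).sub_const s)
      exact this.congr_deriv (by simp)
    · apply ContinuousOn.intervalIntegrable
      rw [uIcc_of_le hab.le]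
      exact qt_cont.comp (by fun_prop) fun t ht => hd _ hs _ ht
  rw [setIntegral_congr_fun measurableSet_Icc hin]
  rw [integral_Icc_eq_integral_Ioc, ← intervalIntegral.integral_of_le hab.le]
  rw [intervalIntegral.integral_eq_sub_of_hasDerivAt (f := fun s => nt (a - s) - nt (b - s))]
  · have e1 : a - b = -(b - a) := by ring
    rw [sub_self, sub_self, e1]
    simp only [nt, neg_neg, neg_zero]
    rw [max_eq_left hw2, max_eq_right (by linarith : -(b - a) ≤ 1/2),
      max_eq_right (by norm_num : (0:ℝ) ≤ 1/2), nn_half]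
    ring
  · intro s hs
    rw [uIcc_of_le hab.le] at hs
    have c1 := (nt_deriv (hd s hs a ha').1 (hd s hs a ha').2).comp s ((hasDerivAt_id s).const_sub a)
    have c2 := (nt_deriv (hd s hs b hb').1 (hd s hs b hb').2).comp s ((hasDerivAt_id s).const_sub b)
    refine (c1.sub c2).congr_deriv ?_
    simp; ring
  · apply ContinuousOn.intervalIntegrable
    rw [uIcc_of_le hab.le]
    have hk : ContinuousOn kt (Ioo (-1) 1) := fun x hx =>
      (kt_deriv hx.1 hx.2).continuousAt.continuousWithinAt
    exact (hk.comp (by fun_prop) fun s hs => hd _ hs _ hb').sub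
      (hk.comp (by fun_prop) fun s hs => hd _ hs _ ha')


/-- Chord-arc estimate. -/
lemma chord_lower {γ : ℝ → E3} (hd : Differentiable ℝ γ) {K : ℝ}
    (hK : ∀ s t : ℝ, ‖deriv γ s - deriv γ t‖ ≤ K * |s - t|)
    (hunit : ∀ s : ℝ, ‖deriv γ s‖ = 1) (s t : ℝ) :
    |t - s| * (1 - K ^ 2 * |t - s| ^ 2 / 2) ≤ ‖γ s - γ t‖ := by
  have hG : ∀ u ∈ Icc (min s t) (max s t), HasDerivAt (fun u => inner ℝ (deriv γ s) (γ u))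
      (inner ℝ (deriv γ s) (deriv γ u)) u := by
    intro u _
    have := (hasDerivAt_const u (deriv γ s)).inner ℝ (hd u).hasDerivAt
    simpa using this
  obtain ⟨ξ, -, h1, -, h2⟩ := mvt_icc hG (s := s) (t := t) ⟨min_le_left _ _, le_max_left _ _⟩
    ⟨min_le_right _ _, le_max_right _ _⟩
  have h3 : inner ℝ (deriv γ s) (deriv γ ξ) = 1 - ‖deriv γ s - deriv γ ξ‖ ^ 2 / 2 := by
    rw [@norm_sub_sq_real, hunit, hunit]; ring
  have hK0 : 0 ≤ K := by
    have := (norm_nonneg _).trans (hK 0 1)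
    simpa using this
  have h4 : ‖deriv γ s - deriv γ ξ‖ ^ 2 ≤ K ^ 2 * |t - s| ^ 2 := by
    rw [← mul_pow]
    refine pow_le_pow_left₀ (norm_nonneg _) ((hK s ξ).trans ?_) 2
    rw [abs_sub_comm]
    exact mul_le_mul_of_nonneg_left h1 hK0
  have h5 : |inner ℝ (deriv γ s) (γ t - γ s)| ≤ ‖γ s - γ t‖ := by
    have := abs_real_inner_le_norm (deriv γ s) (γ t - γ s)
    rwa [hunit, one_mul, norm_sub_rev] at this
  rw [inner_sub_right, h2, abs_mul] at h5
  refine le_trans (mul_le_mul_of_nonneg_left ?_ (abs_nonneg _)) h5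
  rw [h3]
  refine le_trans ?_ (le_abs_self _)
  linarith

lemma chord_upper {γ : ℝ → E3} (hd : Differentiable ℝ γ)
    (hunit : ∀ s : ℝ, ‖deriv γ s‖ = 1) (s t : ℝ) : ‖γ s - γ t‖ ≤ |t - s| := by
  have := Convex.norm_image_sub_le_of_norm_deriv_le (𝕜 := ℝ) (f := γ) (C := 1) (s := univ)
    (fun x _ => hd x) (fun x _ => (hunit x).le) convex_univ (mem_univ t) (mem_univ s)
  rwa [one_mul, Real.norm_eq_abs, abs_sub_comm] at this

lemma deriv_lip {γ : ℝ → E3} (hC2 : ContDiff ℝ 2 γ) (hper : Function.Periodic γ 1) :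
    ∃ K : ℝ, ∀ s t : ℝ, ‖deriv γ s - deriv γ t‖ ≤ K * |s - t| := by
  have h1 : ContDiff ℝ 1 (deriv γ) := by
    have : ContDiff ℝ (1 + 1) γ := by simpa [one_add_one_eq_two] using hC2
    exact (contDiff_succ_iff_deriv.1 this).2.2
  have hp1 : Function.Periodic (deriv γ) 1 := by
    intro x
    rw [← deriv_comp_add_const]
    congr 1
    ext1 y
    exact hper y
  have hp2 : Function.Periodic (deriv (deriv γ)) 1 := by
    intro x
    rw [← deriv_comp_add_const]
    congr 1
    ext1 y
    exact hp1 y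
  have hc : Continuous (deriv (deriv γ)) := h1.continuous_deriv le_rfl
  obtain ⟨K, hK⟩ := (isCompact_Icc (a := (0:ℝ)) (b := 1)).exists_bound_of_continuousOn hc.continuousOn
  refine ⟨K, fun s t => ?_⟩
  refine Convex.norm_image_sub_le_of_norm_deriv_le (𝕜 := ℝ) (f := deriv γ) (C := K) (s := univ)
    (fun x _ => (h1.differentiable one_ne_zero) x) (fun x _ => ?_) convex_univ
    (mem_univ t) (mem_univ s)
  obtain ⟨y, hy, hxy⟩ := hp2.exists_mem_Ico₀ one_pos x
  rw [hxy]
  exact hK y ⟨hy.1, hy.2.le⟩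

/-- The closed-knot energy density is nonnegative and bounded. -/
lemma density_bound {γ : ℝ → E3} (hC2 : ContDiff ℝ 2 γ)
    (hper : Function.Periodic γ 1)
    (hinj : ∀ s t : ℝ, γ s = γ t → ∃ n : ℤ, s - t = n)
    (hunit : ∀ s : ℝ, ‖deriv γ s‖ = 1) :
    ∃ C : ℝ, ∀ s ∈ Icc (0:ℝ) 1, ∀ t ∈ Icc (0:ℝ) 1,
      0 ≤ 1 / ‖γ s - γ t‖ ^ 2 - 1 / arcd s t ^ 2 ∧
      1 / ‖γ s - γ t‖ ^ 2 - 1 / arcd s t ^ 2 ≤ C := by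
  have hd : Differentiable ℝ γ := hC2.differentiable two_ne_zero
  obtain ⟨K0, hK0⟩ := deriv_lip hC2 hper
  set K := max K0 2 with hKdef
  have hK2 : 2 ≤ K := le_max_right _ _
  have hK : ∀ s t : ℝ, ‖deriv γ s - deriv γ t‖ ≤ K * |s - t| := fun s t =>
    (hK0 s t).trans (mul_le_mul_of_nonneg_right (le_max_left _ _) (abs_nonneg _))
  -- the far region
  set δ := 1 / K with hδ
  have hδ0 : 0 < δ := by positivity
  set S : Set (ℝ × ℝ) := {p | p ∈ Icc (0:ℝ) 1 ×ˢ Icc (0:ℝ) 1 ∧ δ ≤ |p.1 - p.2| ∧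
    |p.1 - p.2| ≤ 1 - δ} with hS
  have hScomp : IsCompact S := by
    have : S = (Icc (0:ℝ) 1 ×ˢ Icc (0:ℝ) 1) ∩ ({p | δ ≤ |p.1 - p.2|} ∩ {p | |p.1 - p.2| ≤ 1 - δ}) := rfl
    rw [this]
    apply (isCompact_Icc.prod isCompact_Icc).inter_right
    exact (isClosed_le (by fun_prop) (by fun_prop)).inter (isClosed_le (by fun_prop) (by fun_prop))
  have hSne : ∀ p ∈ S, γ p.1 - γ p.2 ≠ 0 := by
    intro p hp h
    obtain ⟨n, hn⟩ := hinj _ _ (sub_eq_zero.1 h)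
    have h1 := hp.2.1
    have h2 := hp.2.2
    rw [hn] at h1 h2
    have h3 : (0:ℝ) < |(n:ℝ)| := by linarith
    have h4 : |(n:ℝ)| < 1 := by linarith
    rw [← Int.cast_abs] at h3 h4
    have h5 : 0 < |n| := by exact_mod_cast h3
    have h6 : |n| < 1 := by exact_mod_cast h4
    omega
  have hcont : ContinuousOn (fun p : ℝ × ℝ => 1 / ‖γ p.1 - γ p.2‖ ^ 2) S := by
    have := hd.continuous
    refine continuousOn_const.div (by fun_prop) fun p hp => ?_
    exact pow_ne_zero 2 (norm_ne_zero_iff.2 (hSne p hp))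
  obtain ⟨C2, hC2'⟩ := hScomp.exists_bound_of_continuousOn hcont
  refine ⟨max C2 (4 * K ^ 2), fun s hs t ht => ?_⟩
  have hst : |s - t| ≤ 1 := by
    rw [abs_le]; constructor <;> linarith [hs.1, hs.2, ht.1, ht.2]
  -- a parameter `t'` realizing the distance
  obtain ⟨t', ht1, ht2⟩ : ∃ t' : ℝ, γ t' = γ t ∧ |t' - s| = arcd s t := by
    unfold arcd
    rcases le_total |s - t| (1 - |s - t|) with h | h
    · exact ⟨t, rfl, by rw [min_eq_left h, abs_sub_comm]⟩
    · rw [min_eq_right h]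
      rcases le_total s t with h' | h'
      · refine ⟨t - 1, hper.sub_eq t, ?_⟩
        rw [abs_of_nonpos (by linarith [hs.1, ht.2] : t - 1 - s ≤ 0), abs_of_nonpos (by linarith)]
        ring
      · refine ⟨t + 1, hper t, ?_⟩
        rw [abs_of_nonneg (by linarith [hs.2, ht.1] : 0 ≤ t + 1 - s), abs_of_nonneg (by linarith)]
        ring
  set x := arcd s t with hx
  have hx0 : 0 ≤ x := ht2 ▸ abs_nonneg _
  have hup : ‖γ s - γ t‖ ≤ x := by
    have := chord_upper hd hunit s t'
    rwa [ht1, ht2] at this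
  have hlo : x * (1 - K ^ 2 * x ^ 2 / 2) ≤ ‖γ s - γ t‖ := by
    have := chord_lower hd hK hunit s t'
    rwa [ht1, ht2] at this
  rcases hx0.eq_or_lt with h0 | h0
  · rw [← h0] at hup ⊢
    have : ‖γ s - γ t‖ = 0 := le_antisymm hup (norm_nonneg _)
    rw [this]
    simp
    right; positivity
  have hnpos : 0 < ‖γ s - γ t‖ := by
    rcases (norm_nonneg (γ s - γ t)).eq_or_lt with h | h
    · exfalso
      obtain ⟨n, hn⟩ := hinj _ _ (sub_eq_zero.1 (norm_eq_zero.1 h.symm))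
      have h1 : x ≤ |s - t| := min_le_left _ _
      have h2 : x ≤ 1 - |s - t| := min_le_right _ _
      rw [hn] at h1 h2
      have h3 : (0:ℝ) < |(n:ℝ)| := by linarith
      have h4 : |(n:ℝ)| < 1 := by linarith
      rw [← Int.cast_abs] at h3 h4
      have h5 : 0 < |n| := by exact_mod_cast h3
      have h6 : |n| < 1 := by exact_mod_cast h4
      omega
    · exact h
  constructor
  · rw [sub_nonneg]
    exact one_div_le_one_div_of_le (by positivity) (pow_le_pow_left₀ hnpos.le hup 2)
  · rcases le_total δ x with hfar | hnear
    · refine le_trans ?_ (le_max_left _ _)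
      have h1 : x ≤ |s - t| := min_le_left _ _
      have h2 : x ≤ 1 - |s - t| := min_le_right _ _
      have := hC2' (s, t) ⟨⟨hs, ht⟩, hfar.trans h1, by simp only; linarith⟩
      rw [Real.norm_eq_abs] at this
      have h3 := le_of_abs_le this
      have h4 : 0 ≤ 1 / x ^ 2 := by positivity
      simp only at h3
      linarith
    · refine le_trans ?_ (le_max_right _ _)
      have hKx : K * x ≤ 1 := by
        calc K * x ≤ K * δ := mul_le_mul_of_nonneg_left hnear (by linarith)
          _ = 1 := by rw [hδ]; field_simp
      set y := K ^ 2 * x ^ 2 / 2 with hy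
      have hy0 : 0 ≤ y := by positivity
      have hy1 : y ≤ 1 / 2 := by
        have : (K * x) ^ 2 ≤ 1 := pow_le_one₀ (by positivity) hKx
        rw [hy]; nlinarith
      have hb : 1 / ‖γ s - γ t‖ ^ 2 ≤ 1 / (x * (1 - y)) ^ 2 := by
        apply one_div_le_one_div_of_le
        · have : 0 < 1 - y := by linarith
          positivity
        · exact pow_le_pow_left₀ (mul_nonneg hx0 (by linarith)) hlo 2
      have hc : 1 / (x * (1 - y)) ^ 2 - 1 / x ^ 2 ≤ 4 * K ^ 2 := by
        have h1y : 0 < 1 - y := by linarith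
        have : 1 / (x * (1 - y)) ^ 2 - 1 / x ^ 2 = (2 * y - y ^ 2) / (x ^ 2 * (1 - y) ^ 2) := by
          field_simp; ring
        rw [this, div_le_iff₀ (by positivity)]
        have e : 4 * K ^ 2 * (x ^ 2 * (1 - y) ^ 2) = 8 * y * (1 - y) ^ 2 := by rw [hy]; ring
        rw [e]
        have h14 : 1 / 4 ≤ (1 - y) ^ 2 := by nlinarith
        nlinarith [mul_le_mul_of_nonneg_left h14 hy0]
      linarith


lemma limit_four {f F : ℝ → ℝ} {R C : ℝ} (hR : 0 < R) (hC : 0 ≤ C)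
    (hF : ∀ x ∈ Ioo (0:ℝ) 1, HasDerivAt F (f x) x)
    (hlo : ∀ x ∈ Ioo (0:ℝ) 1, R * (1 / arcd x 0 ^ 2) ≤ f x)
    (hup : ∀ x ∈ Ioo (0:ℝ) 1, f x ≤ R * (1 / arcd x 0 ^ 2 + C)) :
    Tendsto (fun a => Real.log (f a) + Real.log (f (1 - a))
      - 2 * Real.log ((F (1 - a) - F a) / ((1 - a) - a)) + 2 * nn ((1 - a) - a))
      (𝓝[>] 0) (𝓝 4) := by
  have hev : ∀ᶠ a : ℝ in 𝓝[>] 0, 0 < a ∧ a < 1/4 := by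
    filter_upwards [self_mem_nhdsWithin, nhdsWithin_le_nhds (Iio_mem_nhds (by norm_num : (0:ℝ) < 1/4))]
      with a h1 h2
    exact ⟨h1, h2⟩
  have hid : Tendsto (fun a : ℝ => a) (𝓝[>] 0) (𝓝 0) := nhdsWithin_le_nhds
  -- limits of `a² f`
  have hend : ∀ x : ℝ → ℝ, (∀ᶠ a : ℝ in 𝓝[>] 0, x a ∈ Ioo (0:ℝ) 1 ∧ arcd (x a) 0 = a) →
      Tendsto (fun a => a ^ 2 * f (x a)) (𝓝[>] 0) (𝓝 R) := by
    intro x hx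
    have hu : Tendsto (fun a : ℝ => R * (1 + C * a ^ 2)) (𝓝[>] 0) (𝓝 R) := by
      have : Tendsto (fun a : ℝ => R * (1 + C * a ^ 2)) (𝓝 0) (𝓝 (R * (1 + C * 0 ^ 2))) :=
        Continuous.tendsto (by fun_prop) 0
      simpa using this.mono_left nhdsWithin_le_nhds
    refine tendsto_of_tendsto_of_tendsto_of_le_of_le' tendsto_const_nhds hu ?_ ?_
    · filter_upwards [hev, hx] with a ha hxa
      have := mul_le_mul_of_nonneg_left (hlo _ hxa.1) (sq_nonneg a)
      rw [hxa.2] at this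
      have ha0 := ha.1.ne'
      refine le_trans (le_of_eq ?_) this
      field_simp
    · filter_upwards [hev, hx] with a ha hxa
      have := mul_le_mul_of_nonneg_left (hup _ hxa.1) (sq_nonneg a)
      rw [hxa.2] at this
      have ha0 := ha.1.ne'
      refine this.trans (le_of_eq ?_)
      field_simp
  have hl1 := hend (fun a => a) (by
    filter_upwards [hev] with a ha
    refine ⟨⟨ha.1, by linarith [ha.2]⟩, ?_⟩
    rw [arcd, sub_zero, abs_of_pos ha.1, min_eq_left (by linarith [ha.2])])
  have hl2 := hend (fun a => 1 - a) (by
    filter_upwards [hev] with a ha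
    refine ⟨⟨by linarith [ha.2], by linarith [ha.1]⟩, ?_⟩
    rw [arcd, sub_zero, abs_of_pos (by linarith [ha.2]), min_eq_right (by linarith [ha.2])]
    ring)
  have hl3 : Tendsto (fun a => a * (F (1 - a) - F a) / 2) (𝓝[>] 0) (𝓝 R) := by
    have hbd : ∀ x ∈ Ioo (0:ℝ) 1, |f x - R * (1 / (1 - x) ^ 2 + 1 / x ^ 2)| ≤ R * (C + 4) := by
      intro x hx
      have h1 := hlo x hx
      have h2 := hup x hx
      have h3 : ∀ z : ℝ, 1/2 ≤ z → 1 / z ^ 2 ≤ 4 := by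
        intro z hz
        rw [div_le_iff₀ (by positivity)]; nlinarith
      obtain ⟨e, he0, he4, he⟩ : ∃ e : ℝ, 0 ≤ e ∧ e ≤ 4 ∧
          1 / (1 - x) ^ 2 + 1 / x ^ 2 = 1 / arcd x 0 ^ 2 + e := by
        unfold arcd
        rw [sub_zero, abs_of_pos hx.1]
        rcases le_total x (1 - x) with h | h
        · rw [min_eq_left h]
          exact ⟨1 / (1 - x) ^ 2, by positivity, h3 _ (by linarith), by ring⟩
        · rw [min_eq_right h]
          exact ⟨1 / x ^ 2, by positivity, h3 _ (by linarith), by ring⟩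
      rw [he, abs_le]
      constructor <;> nlinarith
    have hkey : ∀ᶠ a : ℝ in 𝓝[>] 0,
        |a * (F (1 - a) - F a) / 2 - R * (1 - a / (1 - a))| ≤ a * (R * (C + 4)) := by
      filter_upwards [hev] with a ha
      have hsub : Icc a (1 - a) ⊆ Ioo (0:ℝ) 1 := fun x hx =>
        ⟨by linarith [hx.1, ha.1], by linarith [hx.2, ha.1]⟩
      have hG : ∀ x ∈ Icc a (1 - a), HasDerivAt (fun x => F x - R * (1 / (1 - x) - 1 / x))
          (f x - R * (1 / (1 - x) ^ 2 + 1 / x ^ 2)) x := by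
        intro x hx
        have hx' := hsub hx
        have e1 : x ≠ 0 := hx'.1.ne'
        have e2 : 1 - x ≠ 0 := by linarith [hx'.2]
        have := (hF x hx').sub ((((hasDerivAt_const x (1:ℝ)).div ((hasDerivAt_id x).const_sub 1) e2).sub
          ((hasDerivAt_const x (1:ℝ)).div (hasDerivAt_id x) e1)).const_mul R)
        refine this.congr_deriv ?_
        simp
        left
        ring
      obtain ⟨ξ, hξ, -, -, h⟩ := mvt_icc hG (s := a) (t := 1 - a) ⟨le_rfl, by linarith [ha.2]⟩
        ⟨by linarith [ha.2], le_rfl⟩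
      have hb := hbd ξ (hsub hξ)
      set D := f ξ - R * (1 / (1 - ξ) ^ 2 + 1 / ξ ^ 2)
      have e1 : a ≠ 0 := ha.1.ne'
      have e2 : 1 - a ≠ 0 := by linarith [ha.2]
      have : a * (F (1 - a) - F a) / 2 - R * (1 - a / (1 - a)) = a * ((1 - a - a) / 2 * D) := by
        have h' : F (1 - a) - F a = (1 - a - a) * D + R * (2 / a - 2 / (1 - a)) := by
          rw [← h, sub_sub_cancel]; ring
        rw [h']; field_simp; ring
      rw [this, abs_mul, abs_of_pos ha.1]
      refine mul_le_mul_of_nonneg_left ?_ ha.1.le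
      rw [abs_mul, abs_of_pos (by linarith [ha.2] : 0 < (1 - a - a) / 2)]
      have : (1 - a - a) / 2 ≤ 1 := by linarith [ha.1]
      calc _ ≤ 1 * |D| := mul_le_mul_of_nonneg_right this (abs_nonneg _)
        _ ≤ _ := by rw [one_mul]; exact hb
    have h0 : Tendsto (fun a : ℝ => a * (R * (C + 4))) (𝓝[>] 0) (𝓝 0) := by
      simpa using hid.mul_const (R * (C + 4))
    have h1 : Tendsto (fun a : ℝ => a * (F (1 - a) - F a) / 2 - R * (1 - a / (1 - a)))
        (𝓝[>] 0) (𝓝 0) := squeeze_zero_norm' hkey h0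
    have h2 : Tendsto (fun a : ℝ => R * (1 - a / (1 - a))) (𝓝[>] 0) (𝓝 R) := by
      have : Tendsto (fun a : ℝ => R * (1 - a / (1 - a))) (𝓝[>] 0) (𝓝 (R * (1 - 0 / (1 - 0)))) :=
        (tendsto_const_nhds.sub (hid.div (tendsto_const_nhds.sub hid) (by norm_num))).const_mul R
      simpa using this
    simpa using h1.add h2
  have hfin : Tendsto (fun a => Real.log (a ^ 2 * f a) + Real.log (a ^ 2 * f (1 - a))
      - 2 * Real.log (a * (F (1 - a) - F a) / 2) + (4 - 16 * a)) (𝓝[>] 0) (𝓝 4) := by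
    have := ((hl1.log hR.ne').add (hl2.log hR.ne')).sub ((hl3.log hR.ne').const_mul 2) |>.add
      ((tendsto_const_nhds (x := (4:ℝ))).sub (hid.const_mul 16))
    refine this.trans_eq ?_
    congr 1; ring
  refine hfin.congr' ?_
  filter_upwards [hev, hl1.eventually (lt_mem_nhds hR), hl2.eventually (lt_mem_nhds hR),
    hl3.eventually (lt_mem_nhds hR)] with a ha p1 p2 p3
  have ha0 := ha.1
  have q1 : f a ≠ 0 := fun h => by rw [h, mul_zero] at p1; exact lt_irrefl _ p1
  have q2 : f (1 - a) ≠ 0 := fun h => by rw [h, mul_zero] at p2; exact lt_irrefl _ p2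
  have q3 : F (1 - a) - F a ≠ 0 := fun h => by
    rw [h, mul_zero, zero_div] at p3; exact lt_irrefl _ p3
  have q4 : 1 - a - a ≠ 0 := by linarith [ha.2]
  have q5 : a ^ 2 ≠ 0 := by positivity
  have q6 : (1:ℝ) - (1 - a - a) = 2 * a := by ring
  rw [nn, q6, Real.log_mul q5 q1, Real.log_mul q5 q2, Real.log_div q3 q4,
    Real.log_div (mul_ne_zero ha0.ne' q3) two_ne_zero, Real.log_mul ha0.ne' q3,
    Real.log_mul two_ne_zero ha0.ne', Real.log_pow]
  push_cast
  ring


lemma inv3_eq (c : E3) (r : ℝ) : inv3 c r = EuclideanGeometry.inversion c r := by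
  funext x
  simp only [inv3, EuclideanGeometry.inversion, vsub_eq_sub, vadd_eq_add, dist_eq_norm, div_pow]
  rw [add_comm]

lemma ne_base {γ : ℝ → E3} (hinj : ∀ s t : ℝ, γ s = γ t → ∃ n : ℤ, s - t = n)
    {u : ℝ} (hu : u ∈ Ioo (0:ℝ) 1) : γ u ≠ γ 0 := by
  intro h
  obtain ⟨n, hn⟩ := hinj _ _ h
  rw [sub_zero] at hn
  have h1 := hu.1
  have h2 := hu.2
  rw [hn] at h1 h2
  have h3 : 0 < n := by exact_mod_cast h1
  have h4 : n < 1 := by exact_mod_cast h2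
  omega

lemma norm_deriv_eta {γ : ℝ → E3} (hd : Differentiable ℝ γ)
    (hinj : ∀ s t : ℝ, γ s = γ t → ∃ n : ℤ, s - t = n)
    (hunit : ∀ s : ℝ, ‖deriv γ s‖ = 1) (r : ℝ) {u : ℝ} (hu : u ∈ Ioo (0:ℝ) 1) :
    ‖deriv (inv3 (γ 0) r ∘ γ) u‖ = r ^ 2 / ‖γ u - γ 0‖ ^ 2 := by
  have h1 := (EuclideanGeometry.hasFDerivAt_inversion (R := r) (ne_base hinj hu)).comp_hasDerivAt u
    (hd u).hasDerivAt
  rw [inv3_eq, h1.deriv]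
  simp [norm_smul, hunit, dist_eq_norm, div_pow]

lemma eta_contDiffOn {γ : ℝ → E3} (hC2 : ContDiff ℝ 2 γ)
    (hinj : ∀ s t : ℝ, γ s = γ t → ∃ n : ℤ, s - t = n) (r : ℝ) :
    ContDiffOn ℝ 2 (inv3 (γ 0) r ∘ γ) (Ioo 0 1) := by
  rw [inv3_eq]
  exact contDiffOn_const.inversion contDiffOn_const hC2.contDiffOn fun a ha => ne_base hinj ha

lemma chord_le_arcLen {γ : ℝ → E3} (hC2 : ContDiff ℝ 2 γ)
    (hinj : ∀ s t : ℝ, γ s = γ t → ∃ n : ℤ, s - t = n) (r : ℝ)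
    {s t : ℝ} (hs : s ∈ Ioo (0:ℝ) 1) (ht : t ∈ Ioo (0:ℝ) 1) :
    ‖inv3 (γ 0) r (γ s) - inv3 (γ 0) r (γ t)‖ ≤ arcLen (inv3 (γ 0) r ∘ γ) s t := by
  have hη := eta_contDiffOn hC2 hinj r
  have hsub : uIcc s t ⊆ Ioo (0:ℝ) 1 := ordConnected_Ioo.uIcc_subset hs ht
  have hc : ContinuousOn (deriv (inv3 (γ 0) r ∘ γ)) (Ioo 0 1) :=
    hη.continuousOn_deriv_of_isOpen isOpen_Ioo (by norm_num)
  have h1 := intervalIntegral.integral_eq_sub_of_hasDerivAt (f := inv3 (γ 0) r ∘ γ)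
    (f' := deriv (inv3 (γ 0) r ∘ γ)) (a := s) (b := t)
    (fun x hx => ((hη.differentiableOn two_ne_zero).differentiableAt
      (isOpen_Ioo.mem_nhds (hsub hx))).hasDerivAt)
    ((hc.mono hsub).intervalIntegrable)
  have h2 := intervalIntegral.norm_integral_le_abs_integral_norm
    (f := deriv (inv3 (γ 0) r ∘ γ)) (a := s) (b := t) (μ := volume)
  rw [h1] at h2
  rw [norm_sub_rev]
  exact h2

/-- the speed of the inverted curve -/
def spd (γ : ℝ → E3) (r u : ℝ) : ℝ := r ^ 2 / ‖γ u - γ 0‖ ^ 2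
/-- a primitive of the speed -/
def prim (γ : ℝ → E3) (r u : ℝ) : ℝ := ∫ x in (1/2)..u, spd γ r x

lemma spd_contDiffOn {γ : ℝ → E3} (hC2 : ContDiff ℝ 2 γ)
    (hinj : ∀ s t : ℝ, γ s = γ t → ∃ n : ℤ, s - t = n) (r : ℝ) :
    ContDiffOn ℝ 2 (spd γ r) (Ioo 0 1) := by
  unfold spd
  refine contDiffOn_const.div ?_ ?_
  · exact ((hC2.sub contDiff_const).norm_sq ℝ).contDiffOn
  · intro x hx
    exact pow_ne_zero 2 (norm_ne_zero_iff.2 (sub_ne_zero.2 (ne_base hinj hx)))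

lemma spd_intervalIntegrable {γ : ℝ → E3} (hC2 : ContDiff ℝ 2 γ)
    (hinj : ∀ s t : ℝ, γ s = γ t → ∃ n : ℤ, s - t = n) (r : ℝ)
    {s t : ℝ} (hs : s ∈ Ioo (0:ℝ) 1) (ht : t ∈ Ioo (0:ℝ) 1) :
    IntervalIntegrable (spd γ r) volume s t :=
  ((spd_contDiffOn hC2 hinj r).continuousOn.mono
    (ordConnected_Ioo.uIcc_subset hs ht)).intervalIntegrable

lemma half_mem : (1/2 : ℝ) ∈ Ioo (0:ℝ) 1 := ⟨by norm_num, by norm_num⟩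

lemma prim_deriv {γ : ℝ → E3} (hC2 : ContDiff ℝ 2 γ)
    (hinj : ∀ s t : ℝ, γ s = γ t → ∃ n : ℤ, s - t = n) (r : ℝ)
    {x : ℝ} (hx : x ∈ Ioo (0:ℝ) 1) : HasDerivAt (prim γ r) (spd γ r x) x := by
  have hm : Measurable (spd γ r) := by
    have := hC2.continuous.measurable
    unfold spd
    fun_prop
  exact intervalIntegral.integral_hasDerivAt_right
    (spd_intervalIntegrable hC2 hinj r half_mem hx)
    hm.stronglyMeasurable.stronglyMeasurableAtFilter
    ((spd_contDiffOn hC2 hinj r).continuousOn.continuousAt (isOpen_Ioo.mem_nhds hx))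

lemma arcLen_eq {γ : ℝ → E3} (hC2 : ContDiff ℝ 2 γ)
    (hinj : ∀ s t : ℝ, γ s = γ t → ∃ n : ℤ, s - t = n)
    (hunit : ∀ s : ℝ, ‖deriv γ s‖ = 1) (r : ℝ)
    {s t : ℝ} (hs : s ∈ Ioo (0:ℝ) 1) (ht : t ∈ Ioo (0:ℝ) 1) :
    arcLen (inv3 (γ 0) r ∘ γ) s t = |prim γ r t - prim γ r s| := by
  unfold arcLen prim
  rw [intervalIntegral.integral_interval_sub_left
    (spd_intervalIntegrable hC2 hinj r half_mem ht) (spd_intervalIntegrable hC2 hinj r half_mem hs)]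
  congr 1
  apply intervalIntegral.integral_congr
  intro u hu
  exact norm_deriv_eta (hC2.differentiable two_ne_zero) hinj hunit r
    (ordConnected_Ioo.uIcc_subset hs ht hu)

lemma integrand_eq {γ : ℝ → E3} (hC2 : ContDiff ℝ 2 γ)
    (hinj : ∀ s t : ℝ, γ s = γ t → ∃ n : ℤ, s - t = n)
    (hunit : ∀ s : ℝ, ‖deriv γ s‖ = 1) {r : ℝ} (hr : 0 < r)
    {s t : ℝ} (hs : s ∈ Ioo (0:ℝ) 1) (ht : t ∈ Ioo (0:ℝ) 1) :
    (1 / ‖inv3 (γ 0) r (γ s) - inv3 (γ 0) r (γ t)‖ ^ 2 -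
            1 / arcLen (inv3 (γ 0) r ∘ γ) s t ^ 2) *
          (‖deriv (inv3 (γ 0) r ∘ γ) s‖ * ‖deriv (inv3 (γ 0) r ∘ γ) t‖) =
    (1 / ‖γ s - γ t‖ ^ 2 - 1 / arcd s t ^ 2)
      - (spd γ r s * spd γ r t / (prim γ r t - prim γ r s) ^ 2 - 1 / (t - s) ^ 2)
      - (1 / (t - s) ^ 2 - 1 / arcd s t ^ 2) := by
  have hd := hC2.differentiable two_ne_zero
  have hs0 := ne_base hinj hs
  have ht0 := ne_base hinj ht
  have e1 : ‖inv3 (γ 0) r (γ s) - inv3 (γ 0) r (γ t)‖ =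
      r ^ 2 / (‖γ s - γ 0‖ * ‖γ t - γ 0‖) * ‖γ s - γ t‖ := by
    rw [inv3_eq, ← dist_eq_norm, EuclideanGeometry.dist_inversion_inversion hs0 ht0]
    simp only [dist_eq_norm]
  rw [norm_deriv_eta hd hinj hunit r hs, norm_deriv_eta hd hinj hunit r ht,
    arcLen_eq hC2 hinj hunit r hs ht, e1, sq_abs]
  change (_ - _) * (spd γ r s * spd γ r t) = _
  have n1 : ‖γ s - γ 0‖ ≠ 0 := norm_ne_zero_iff.2 (sub_ne_zero.2 hs0)
  have n2 : ‖γ t - γ 0‖ ≠ 0 := norm_ne_zero_iff.2 (sub_ne_zero.2 ht0)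
  have e2 : 1 / (r ^ 2 / (‖γ s - γ 0‖ * ‖γ t - γ 0‖) * ‖γ s - γ t‖) ^ 2 *
      (spd γ r s * spd γ r t) = 1 / ‖γ s - γ t‖ ^ 2 := by
    unfold spd
    by_cases h : ‖γ s - γ t‖ = 0
    · rw [h]; simp
    · field_simp
  rw [sub_mul, e2]
  ring

lemma integrand_nonneg {γ : ℝ → E3} (hC2 : ContDiff ℝ 2 γ)
    (hinj : ∀ s t : ℝ, γ s = γ t → ∃ n : ℤ, s - t = n)
    {r : ℝ} (hr : 0 < r)
    {s t : ℝ} (hs : s ∈ Ioo (0:ℝ) 1) (ht : t ∈ Ioo (0:ℝ) 1) :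
    0 ≤ (1 / ‖inv3 (γ 0) r (γ s) - inv3 (γ 0) r (γ t)‖ ^ 2 -
            1 / arcLen (inv3 (γ 0) r ∘ γ) s t ^ 2) *
          (‖deriv (inv3 (γ 0) r ∘ γ) s‖ * ‖deriv (inv3 (γ 0) r ∘ γ) t‖) := by
  refine mul_nonneg ?_ (by positivity)
  rw [sub_nonneg]
  have hle := chord_le_arcLen hC2 hinj r hs ht
  rcases (norm_nonneg (inv3 (γ 0) r (γ s) - inv3 (γ 0) r (γ t))).eq_or_lt with h | h
  · have h1 : γ s = γ t := by
      have h2 := sub_eq_zero.1 (norm_eq_zero.1 h.symm)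
      rw [inv3_eq] at h2
      exact EuclideanGeometry.inversion_injective _ hr.ne' h2
    obtain ⟨n, hn⟩ := hinj _ _ h1
    have a1 : (n:ℝ) < 1 := by rw [← hn]; linarith [hs.2, ht.1]
    have a2 : (-1:ℝ) < n := by rw [← hn]; linarith [hs.1, ht.2]
    have a3 : n < 1 := by exact_mod_cast a1
    have a4 : -1 < n := by exact_mod_cast a2
    have a5 : n = 0 := by omega
    have a6 : s = t := by rw [a5] at hn; simpa [sub_eq_zero] using hn
    subst a6
    simp [arcLen]
  · exact one_div_le_one_div_of_le (by positivity) (pow_le_pow_left₀ h.le hle 2)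

lemma spd_lip {γ : ℝ → E3} (hC2 : ContDiff ℝ 2 γ)
    (hinj : ∀ s t : ℝ, γ s = γ t → ∃ n : ℤ, s - t = n) (r : ℝ)
    {a b : ℝ} (hab : Icc a b ⊆ Ioo (0:ℝ) 1) :
    ∃ K, ∀ x ∈ Icc a b, ∀ y ∈ Icc a b,
      |deriv (spd γ r) x - deriv (spd γ r) y| ≤ K * |x - y| := by
  have h2 := spd_contDiffOn hC2 hinj r
  have h1 : ContDiffOn ℝ 1 (deriv (spd γ r)) (Ioo 0 1) :=
    h2.deriv_of_isOpen isOpen_Ioo (by norm_num)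
  have hc : ContinuousOn (deriv (deriv (spd γ r))) (Ioo 0 1) :=
    h1.continuousOn_deriv_of_isOpen isOpen_Ioo le_rfl
  obtain ⟨K, hK⟩ := (isCompact_Icc (a := a) (b := b)).exists_bound_of_continuousOn (hc.mono hab)
  refine ⟨K, fun x hx y hy => ?_⟩
  exact Convex.norm_image_sub_le_of_norm_deriv_le (𝕜 := ℝ) (C := K) (s := Icc a b)
    (fun z hz => (h1.differentiableOn one_ne_zero).differentiableAt
      (isOpen_Ioo.mem_nhds (hab hz))) (fun z hz => hK z hz) (convex_Icc a b) hy hx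

lemma sq_restrict : (volume : Measure (ℝ × ℝ)).restrict (Ioo (0:ℝ) 1 ×ˢ Ioo (0:ℝ) 1) =
    (volume : Measure (ℝ × ℝ)).restrict (Icc (0:ℝ) 1 ×ˢ Icc (0:ℝ) 1) := by
  rw [Measure.volume_eq_prod, ← Measure.prod_restrict, ← Measure.prod_restrict,
    restrict_Ioo_eq_restrict_Icc]

lemma density_integrable {γ : ℝ → E3} (hC2 : ContDiff ℝ 2 γ)
    (hper : Function.Periodic γ 1)
    (hinj : ∀ s t : ℝ, γ s = γ t → ∃ n : ℤ, s - t = n)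
    (hunit : ∀ s : ℝ, ‖deriv γ s‖ = 1) :
    IntegrableOn
      (fun p : ℝ × ℝ => 1 / ‖γ p.1 - γ p.2‖ ^ 2 - 1 / arcd p.1 p.2 ^ 2)
      (Icc 0 1 ×ˢ Icc 0 1) := by
  obtain ⟨C, hC⟩ := density_bound hC2 hper hinj hunit
  have hms : MeasurableSet (Icc (0:ℝ) 1 ×ˢ Icc (0:ℝ) 1) := measurableSet_Icc.prod measurableSet_Icc
  have hm : Measurable (fun p : ℝ × ℝ => 1 / ‖γ p.1 - γ p.2‖ ^ 2 - 1 / arcd p.1 p.2 ^ 2) := by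
    have := hC2.continuous.measurable
    unfold arcd
    fun_prop
  refine IntegrableOn.of_bound (C := C) ?_ hm.aestronglyMeasurable ?_
  · exact (isCompact_Icc.prod isCompact_Icc).measure_lt_top
  · filter_upwards [ae_restrict_mem hms] with p hp
    have := hC _ hp.1 _ hp.2
    rw [Real.norm_eq_abs, abs_of_nonneg this.1]
    exact this.2

/-- The energy on the box `[a, 1 - a]²`. -/
lemma box_energy {γ : ℝ → E3} (hC2 : ContDiff ℝ 2 γ)
    (hper : Function.Periodic γ 1)
    (hinj : ∀ s t : ℝ, γ s = γ t → ∃ n : ℤ, s - t = n)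
    (hunit : ∀ s : ℝ, ‖deriv γ s‖ = 1) {r : ℝ} (hr : 0 < r) {a : ℝ} (ha : 0 < a) (ha2 : a ≤ 1/4) :
    IntegrableOn
      (fun p : ℝ × ℝ =>
        (1 / ‖inv3 (γ 0) r (γ p.1) - inv3 (γ 0) r (γ p.2)‖ ^ 2 -
            1 / arcLen (inv3 (γ 0) r ∘ γ) p.1 p.2 ^ 2) *
          (‖deriv (inv3 (γ 0) r ∘ γ) p.1‖ * ‖deriv (inv3 (γ 0) r ∘ γ) p.2‖))
      (Icc a (1 - a) ×ˢ Icc a (1 - a)) ∧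
    ∫ p in Icc a (1 - a) ×ˢ Icc a (1 - a),
        (1 / ‖inv3 (γ 0) r (γ p.1) - inv3 (γ 0) r (γ p.2)‖ ^ 2 -
            1 / arcLen (inv3 (γ 0) r ∘ γ) p.1 p.2 ^ 2) *
          (‖deriv (inv3 (γ 0) r ∘ γ) p.1‖ * ‖deriv (inv3 (γ 0) r ∘ γ) p.2‖) =
      (∫ p in Icc a (1 - a) ×ˢ Icc a (1 - a), (1 / ‖γ p.1 - γ p.2‖ ^ 2 - 1 / arcd p.1 p.2 ^ 2)) -
      (Real.log (spd γ r a) + Real.log (spd γ r (1 - a))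
      - 2 * Real.log ((prim γ r (1 - a) - prim γ r a) / ((1 - a) - a)) + 2 * nn ((1 - a) - a)) := by
  have hms : MeasurableSet (Icc a (1 - a) ×ˢ Icc a (1 - a)) :=
    measurableSet_Icc.prod measurableSet_Icc
  have hsub : Icc a (1 - a) ⊆ Ioo (0:ℝ) 1 := fun x hx =>
    ⟨by linarith [hx.1], by linarith [hx.2]⟩
  have hab : a < 1 - a := by linarith
  obtain ⟨K, hK⟩ := spd_lip hC2 hinj r hsub
  have hF : ∀ x ∈ Icc a (1 - a), HasDerivAt (prim γ r) (spd γ r x) x := fun x hx =>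
    prim_deriv hC2 hinj r (hsub hx)
  have hf : ∀ x ∈ Icc a (1 - a), HasDerivAt (spd γ r) (deriv (spd γ r) x) x := fun x hx =>
    (((spd_contDiffOn hC2 hinj r).differentiableOn two_ne_zero).differentiableAt
      (isOpen_Ioo.mem_nhds (hsub hx))).hasDerivAt
  have hpos : ∀ x ∈ Icc a (1 - a), 0 < spd γ r x := fun x hx => by
    have : 0 < ‖γ x - γ 0‖ := norm_pos_iff.2 (sub_ne_zero.2 (ne_base hinj (hsub hx)))
    unfold spd; positivity
  have i1 : IntegrableOn (fun p : ℝ × ℝ => 1 / ‖γ p.1 - γ p.2‖ ^ 2 - 1 / arcd p.1 p.2 ^ 2)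
      (Icc a (1 - a) ×ˢ Icc a (1 - a)) :=
    (density_integrable hC2 hper hinj hunit).mono_set
      (prod_mono (hsub.trans Ioo_subset_Icc_self) (hsub.trans Ioo_subset_Icc_self))
  have i2 := kernel_integrable hab (by linarith) hF hf hK hpos
  have v2 := kernel_integral hab (by linarith) hF hf hK hpos
  obtain ⟨i3, v3⟩ := arc_integral hab (by linarith) (by linarith)
  have heq : EqOn (fun p : ℝ × ℝ =>
        (1 / ‖inv3 (γ 0) r (γ p.1) - inv3 (γ 0) r (γ p.2)‖ ^ 2 -
            1 / arcLen (inv3 (γ 0) r ∘ γ) p.1 p.2 ^ 2) *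
          (‖deriv (inv3 (γ 0) r ∘ γ) p.1‖ * ‖deriv (inv3 (γ 0) r ∘ γ) p.2‖))
      (fun p : ℝ × ℝ => (1 / ‖γ p.1 - γ p.2‖ ^ 2 - 1 / arcd p.1 p.2 ^ 2)
      - (spd γ r p.1 * spd γ r p.2 / (prim γ r p.2 - prim γ r p.1) ^ 2 - 1 / (p.2 - p.1) ^ 2)
      - (1 / (p.2 - p.1) ^ 2 - 1 / arcd p.1 p.2 ^ 2)) (Icc a (1 - a) ×ˢ Icc a (1 - a)) :=
    fun p hp => integrand_eq hC2 hinj hunit hr (hsub hp.1) (hsub hp.2)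
  refine ⟨IntegrableOn.congr_fun ((i1.sub i2).sub i3) heq.symm hms, ?_⟩
  have i12 : IntegrableOn (fun p : ℝ × ℝ => (1 / ‖γ p.1 - γ p.2‖ ^ 2 - 1 / arcd p.1 p.2 ^ 2)
      - (spd γ r p.1 * spd γ r p.2 / (prim γ r p.2 - prim γ r p.1) ^ 2 - 1 / (p.2 - p.1) ^ 2))
      (Icc a (1 - a) ×ˢ Icc a (1 - a)) := i1.sub i2
  rw [setIntegral_congr_fun hms heq, integral_sub i12 i3, integral_sub i1 i2, v2, v3]
  ring

end Helpers


/-- Inverting a closed knot of length 1 in a sphere centered at a point of the knot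
produces an open long knot `η = I_{c,r} ∘ γ` on `(0,1)`, and the (un-renormalized)
energy of the open long knot equals `E⁽²⁾∘` of the closed knot:
`∬_{(0,1)²} (1/|η(s)−η(t)|² − 1/ℓ_η(s,t)²)|η′(s)||η′(t)| ds dt
  = ∬ (1/|γ(s)−γ(t)|² − 1/d(s,t)²) ds dt − 4`, both sides being finite. -/
theorem energy_open_long_knot (γ : ℝ → E3)
    (hC2 : ContDiff ℝ 2 γ)
    (hper : Function.Periodic γ 1)
    (hinj : ∀ s t : ℝ, γ s = γ t → ∃ n : ℤ, s - t = n)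
    (hunit : ∀ s : ℝ, ‖deriv γ s‖ = 1)
    (r : ℝ) (hr : 0 < r) :
    IntegrableOn
      (fun p : ℝ × ℝ =>
        (1 / ‖inv3 (γ 0) r (γ p.1) - inv3 (γ 0) r (γ p.2)‖ ^ 2 -
            1 / arcLen (inv3 (γ 0) r ∘ γ) p.1 p.2 ^ 2) *
          (‖deriv (inv3 (γ 0) r ∘ γ) p.1‖ * ‖deriv (inv3 (γ 0) r ∘ γ) p.2‖))
      (Set.Ioo 0 1 ×ˢ Set.Ioo 0 1) ∧
    IntegrableOn
      (fun p : ℝ × ℝ => 1 / ‖γ p.1 - γ p.2‖ ^ 2 - 1 / arcd p.1 p.2 ^ 2)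
      (Set.Icc 0 1 ×ˢ Set.Icc 0 1) ∧
    (∫ p in Set.Ioo (0:ℝ) 1 ×ˢ Set.Ioo (0:ℝ) 1,
        (1 / ‖inv3 (γ 0) r (γ p.1) - inv3 (γ 0) r (γ p.2)‖ ^ 2 -
            1 / arcLen (inv3 (γ 0) r ∘ γ) p.1 p.2 ^ 2) *
          (‖deriv (inv3 (γ 0) r ∘ γ) p.1‖ * ‖deriv (inv3 (γ 0) r ∘ γ) p.2‖)) =
      (∫ p in Set.Icc (0:ℝ) 1 ×ˢ Set.Icc (0:ℝ) 1,
        (1 / ‖γ p.1 - γ p.2‖ ^ 2 - 1 / arcd p.1 p.2 ^ 2)) - 4 := by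
  have hB := density_integrable hC2 hper hinj hunit
  obtain ⟨C, hC⟩ := density_bound hC2 hper hinj hunit
  have hC0 : 0 ≤ C := by
    have := hC 0 ⟨le_rfl, zero_le_one⟩ 0 ⟨le_rfl, zero_le_one⟩
    exact this.1.trans this.2
  have hlim := limit_four (f := spd γ r) (F := prim γ r) (R := r ^ 2) (C := C)
    (by positivity) hC0 (fun x hx => prim_deriv hC2 hinj r hx)
    (fun x hx => by
      have h := (hC x (Set.Ioo_subset_Icc_self hx) 0 ⟨le_rfl, zero_le_one⟩).1
      rw [spd, div_eq_mul_one_div (r ^ 2) (‖γ x - γ 0‖ ^ 2)]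
      exact mul_le_mul_of_nonneg_left (by linarith) (by positivity))
    (fun x hx => by
      have h := (hC x (Set.Ioo_subset_Icc_self hx) 0 ⟨le_rfl, zero_le_one⟩).2
      rw [spd, div_eq_mul_one_div]
      exact mul_le_mul_of_nonneg_left (by linarith) (by positivity))
  -- the exhausting boxes
  set a : ℕ → ℝ := fun n => 1 / ((n : ℝ) + 4) with ha
  have ha0 : ∀ n, 0 < a n := fun n => by simp only [ha]; positivity
  have ha4 : ∀ n, a n ≤ 1 / 4 := fun n => by
    simp only [ha]
    exact one_div_le_one_div_of_le (by norm_num) (by linarith [(Nat.cast_nonneg n : (0:ℝ) ≤ n)])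
  have hat : Filter.Tendsto a Filter.atTop (nhds 0) :=
    Filter.Tendsto.div_atTop tendsto_const_nhds
      (Filter.tendsto_atTop_add_const_right _ _ tendsto_natCast_atTop_atTop)
  have hat' : Filter.Tendsto a Filter.atTop (nhdsWithin 0 (Set.Ioi 0)) :=
    tendsto_nhdsWithin_iff.2 ⟨hat, Filter.Eventually.of_forall fun n => ha0 n⟩
  set S : Set (ℝ × ℝ) := Set.Ioo (0:ℝ) 1 ×ˢ Set.Ioo (0:ℝ) 1 with hS
  set φ : ℕ → Set (ℝ × ℝ) := fun n => Set.Icc (a n) (1 - a n) ×ˢ Set.Icc (a n) (1 - a n) with hφ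
  have hSm : MeasurableSet S := measurableSet_Ioo.prod measurableSet_Ioo
  have hφm : ∀ n, MeasurableSet (φ n) := fun n => measurableSet_Icc.prod measurableSet_Icc
  have hφS : ∀ n, φ n ⊆ S := fun n p hp =>
    ⟨⟨by linarith [hp.1.1, ha0 n], by linarith [hp.1.2, ha0 n]⟩,
      ⟨by linarith [hp.2.1, ha0 n], by linarith [hp.2.2, ha0 n]⟩⟩
  have hcover : AECover (volume.restrict S) Filter.atTop φ := by
    refine ⟨?_, hφm⟩
    filter_upwards [ae_restrict_mem hSm] with p hp
    have hev : ∀ ε : ℝ, 0 < ε → ∀ᶠ n in Filter.atTop, a n < ε := fun ε hε =>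
      hat.eventually (gt_mem_nhds hε)
    filter_upwards [hev p.1 hp.1.1, hev (1 - p.1) (by linarith [hp.1.2]), hev p.2 hp.2.1,
      hev (1 - p.2) (by linarith [hp.2.2])] with n h1 h2 h3 h4
    exact ⟨⟨h1.le, by linarith⟩, ⟨h3.le, by linarith⟩⟩
  have hres : ∀ n, (volume.restrict S).restrict (φ n) = volume.restrict (φ n) := fun n => by
    rw [Measure.restrict_restrict (hφm n), Set.inter_eq_left.2 (hφS n)]
  have hB' : IntegrableOn (fun p : ℝ × ℝ => 1 / ‖γ p.1 - γ p.2‖ ^ 2 - 1 / arcd p.1 p.2 ^ 2) S := by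
    rw [IntegrableOn, hS, sq_restrict]; exact hB
  have hBlim := hcover.integral_tendsto_of_countably_generated hB'
  have hfi := fun n => (box_energy hC2 hper hinj hunit hr (ha0 n) (ha4 n)).1
  have hval := fun n => (box_energy hC2 hper hinj hunit hr (ha0 n) (ha4 n)).2
  have htend := hBlim.sub (hlim.comp hat')
  have hnn : ∀ᵐ p ∂(volume.restrict S), 0 ≤
      (1 / ‖inv3 (γ 0) r (γ p.1) - inv3 (γ 0) r (γ p.2)‖ ^ 2 -
            1 / arcLen (inv3 (γ 0) r ∘ γ) p.1 p.2 ^ 2) *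
          (‖deriv (inv3 (γ 0) r ∘ γ) p.1‖ * ‖deriv (inv3 (γ 0) r ∘ γ) p.2‖) := by
    filter_upwards [ae_restrict_mem hSm] with p hp
    exact integrand_nonneg hC2 hinj hr hp.1 hp.2
  have htend2 : Filter.Tendsto (fun n => ∫ p in φ n,
      (1 / ‖inv3 (γ 0) r (γ p.1) - inv3 (γ 0) r (γ p.2)‖ ^ 2 -
            1 / arcLen (inv3 (γ 0) r ∘ γ) p.1 p.2 ^ 2) *
          (‖deriv (inv3 (γ 0) r ∘ γ) p.1‖ * ‖deriv (inv3 (γ 0) r ∘ γ) p.2‖)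
          ∂(volume.restrict S)) Filter.atTop
      (nhds ((∫ p in S, (1 / ‖γ p.1 - γ p.2‖ ^ 2 - 1 / arcd p.1 p.2 ^ 2)) - 4)) := by
    refine htend.congr fun n => ?_
    simp only [hres, Function.comp]
    exact (hval n).symm
  have hfi2 : ∀ n, IntegrableOn (fun p : ℝ × ℝ =>
      (1 / ‖inv3 (γ 0) r (γ p.1) - inv3 (γ 0) r (γ p.2)‖ ^ 2 -
            1 / arcLen (inv3 (γ 0) r ∘ γ) p.1 p.2 ^ 2) *
          (‖deriv (inv3 (γ 0) r ∘ γ) p.1‖ * ‖deriv (inv3 (γ 0) r ∘ γ) p.2‖)) (φ n)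
          (volume.restrict S) := fun n => by
    rw [IntegrableOn, hres]; exact hfi n
  refine ⟨hcover.integrable_of_integral_tendsto_of_nonneg_ae _ hfi2 hnn htend2, hB, ?_⟩
  rw [hcover.integral_eq_of_tendsto_of_nonneg_ae _ hnn hfi2 htend2, hS, sq_restrict]
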